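/- Let H be a real Hilbert space, let C : H →L H be a continuous linear operator that is coercive, i.e., there is α > 0 with ⟨C v, v⟩ ≥ α‖v‖² for all v ∈ H, and let K : H →L H be a compact operator. Set B = C + K. If B is injective, then B is surjective. -/

import Mathlib

open RealInnerProductSpace

/-!
By Lax–Milgram the coercive operator `C` is invertible, so that `C + K = C (1 + C⁻¹ K)` with
`C⁻¹ K` compact. If `C + K` is injective then `-1` is not an eigenvalue of `C⁻¹ K`, hence by the
Riesz theory of compact operators it is not in the spectrum either, and `1 + C⁻¹ K` is surjective.
-/

open Function

theorem not_hasEigenvalue_of_injective_sub_smul_one {R M : Type*} [CommRing R] [AddCommGroup M]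
    [Module R M] {f : Module.End R M} {μ : R} (hinj : Injective (f - μ • 1 : Module.End R M)) :
    ¬ f.HasEigenvalue μ := by
  rw [Module.End.hasEigenvalue_iff, not_not, Module.End.eigenspace_def]
  exact LinearMap.ker_eq_bot.mpr hinj

section Banach

variable {𝕜 X : Type*} [NontriviallyNormedField 𝕜] [NormedAddCommGroup X] [NormedSpace 𝕜 X]
  [CompleteSpace X]

theorem surjective_sub_smul_one_of_isCompactOperator {T : X →L[𝕜] X} (hT : IsCompactOperator T)
    {μ : 𝕜} (hμ : μ ≠ 0) (hinj : Injective (T - μ • 1 : X →L[𝕜] X)) :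
    Surjective (T - μ • 1 : X →L[𝕜] X) := by
  have mem_resolventSet : μ ∈ resolventSet 𝕜 T :=
    (hT.hasEigenvalue_or_mem_resolventSet hμ).resolve_left
      (not_hasEigenvalue_of_injective_sub_smul_one hinj)
  have isUnit : IsUnit (T - μ • 1) := by
    rw [IsUnit.sub_iff, ← Algebra.algebraMap_eq_smul_one]
    exact mem_resolventSet
  exact (ContinuousLinearMap.isUnit_iff_bijective.mp isUnit).surjective

theorem fredholm_injective_surjective_general {Y : Type*} [NormedAddCommGroup Y]
    [NormedSpace 𝕜 Y] {C K : X →L[𝕜] Y} (hC : C.IsInvertible) (hK : IsCompactOperator K)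
    (hinj : Injective (C + K)) : Surjective (C + K) := by
  obtain ⟨e, rfl⟩ := hC
  let T : X →L[𝕜] X := (e.symm : Y →L[𝕜] X) ∘L K
  have hT : IsCompactOperator T := hK.clm_comp (e.symm : Y →L[𝕜] X)
  have factorization : ⇑((e : X →L[𝕜] Y) + K) = e ∘ (T - (-1 : 𝕜) • 1 : X →L[𝕜] X) := by
    ext x
    simp [T, add_comm]
  rw [factorization] at hinj ⊢
  exact e.surjective.comp <| surjective_sub_smul_one_of_isCompactOperator hT
    (neg_ne_zero.mpr one_ne_zero) hinj.of_comp

end Banach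

theorem isInvertible_of_coercive {H : Type*} [NormedAddCommGroup H] [InnerProductSpace ℝ H]
    [CompleteSpace H] {C : H →L[ℝ] H} {α : ℝ} (hα : 0 < α)
    (hcoer : ∀ v : H, α * ‖v‖ ^ 2 ≤ ⟪C v, v⟫) : C.IsInvertible := by
  have form_coercive : IsCoercive ((innerSL ℝ).comp C : H →L[ℝ] H →L[ℝ] ℝ) :=
    ⟨α, hα, fun v ↦ by simpa [pow_two, mul_assoc, innerSL_apply_apply] using hcoer v⟩
  refine ⟨form_coercive.continuousLinearEquivOfBilin, ?_⟩
  ext v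
  exact (form_coercive.unique_continuousLinearEquivOfBilin fun _ ↦ rfl).symm

/-- **Fredholm alternative (existence from uniqueness).**  Let `B = C + K` where `C`
is a coercive continuous linear operator on a real Hilbert space `H` and `K` is a
compact operator.  If `B` is injective, then `B` is surjective. -/
theorem fredholm_injective_surjective
    {H : Type*} [NormedAddCommGroup H] [InnerProductSpace ℝ H] [CompleteSpace H]
    (C K : H →L[ℝ] H)
    (α : ℝ) (hα : 0 < α) (hcoer : ∀ v : H, α * ‖v‖ ^ 2 ≤ ⟪C v, v⟫)
    (hK : IsCompactOperator K) (B : H →L[ℝ] H) (hB : B = C + K)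
    (hinj : Function.Injective B) :
    Function.Surjective B := by
  subst hB
  exact fredholm_injective_surjective_general (isInvertible_of_coercive hα hcoer) hK hinj
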